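/- Fix integers 0 ≤ q < d and let P be a stationary and ergodic probability measure on Ω = [0,1]^{K^d} whose marginal distribution functions F^Q(t) = P(ω_Q ≤ t) are continuous on [0,1] for every Q ∈ K^d. Then the function β̂_q(t) := limsup_{n→∞} |Λ_n|^{−1} E[β_q^n(t)] is uniformly continuous on [0,1]. -/

import Mathlib

open MeasureTheory Filter Topology

noncomputable section

/-- An elementary cube in `ℝ^d`: the `i`-th component is the elementary interval
`[l, l+1]` if the Boolean is `true` (nondegenerate) and `[l, l]` if `false` (degenerate). -/
abbrev ElemCube (d : ℕ) := Fin d → ℤ × Bool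

/-- The dimension of an elementary cube: the number of nondegenerate components. -/
def cubeDim {d : ℕ} (Q : ElemCube d) : ℕ :=
  (Finset.univ.filter fun i => (Q i).2 = true).card

/-- The geometric realization of an elementary cube as a subset of `ℝ^d`. -/
def cubeSet {d : ℕ} (Q : ElemCube d) : Set (Fin d → ℝ) :=
  {x | ∀ i, x i ∈ Set.Icc ((Q i).1 : ℝ) ((Q i).1 + (if (Q i).2 then 1 else 0))}

/-- A cubical set is a union of elementary cubes. -/
def IsCubical {d : ℕ} (X : Set (Fin d → ℝ)) : Prop :=
  ∃ S : Set (ElemCube d), X = ⋃ Q ∈ S, cubeSet Q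

/-- The free `ℤ`-module generated by all elementary cubes of `ℝ^d` (all dimensions mixed). -/
abbrev CubChain (d : ℕ) := ElemCube d →₀ ℤ

/-- The cubical boundary of a single elementary cube, defined by induction on the ambient
dimension, following the inductive definition: in `ℝ¹`, `∂ [l,l+1]^ = [l+1]^ - [l]^` and
`∂ Q̂ = 0` for degenerate `Q`; and for `Q = I × P`,
`∂ Q̂ = (∂ Î) ⋄ P̂ + (-1)^(dim I) Î ⋄ (∂ P̂)`, where `⋄` is the cubical product. -/
def boundaryCube : (d : ℕ) → ElemCube d → CubChain d
  | 0, _ => 0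
  | d + 1, Q =>
      (if (Q 0).2 then
          Finsupp.single (Fin.cons ((Q 0).1 + 1, false) (fun i => Q i.succ)) (1 : ℤ)
            - Finsupp.single (Fin.cons ((Q 0).1, false) (fun i => Q i.succ)) (1 : ℤ)
        else 0)
      + (if (Q 0).2 then (-1 : ℤ) else 1) •
          (boundaryCube d (fun i => Q i.succ)).sum
            (fun R n => Finsupp.single (Fin.cons (Q 0) R) n)

/-- The cubical boundary operator, the `ℤ`-linear extension of `boundaryCube`. -/
def boundaryHom (d : ℕ) : CubChain d →ₗ[ℤ] CubChain d :=
  Finsupp.lsum ℤ fun Q => LinearMap.toSpanSingleton ℤ (CubChain d) (boundaryCube d Q)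

/-- `C_k^d(X)`: the submodule of chains supported on the `k`-dimensional elementary cubes
contained in `X`. -/
def chainsOn (d k : ℕ) (X : Set (Fin d → ℝ)) : Submodule ℤ (CubChain d) :=
  Finsupp.supported ℤ ℤ {Q : ElemCube d | cubeDim Q = k ∧ cubeSet Q ⊆ X}

/-- `Z_q(X) = ker ∂_q^X`, the cycles of the cubical set `X` in degree `q`. -/
def cycleMod (d q : ℕ) (X : Set (Fin d → ℝ)) : Submodule ℤ (CubChain d) :=
  chainsOn d q X ⊓ LinearMap.ker (boundaryHom d)

/-- `B_q(X) = im ∂_{q+1}^X`, the boundaries of the cubical set `X` in degree `q`. -/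
def boundaryMod (d q : ℕ) (X : Set (Fin d → ℝ)) : Submodule ℤ (CubChain d) :=
  Submodule.map (boundaryHom d) (chainsOn d (q + 1) X)

/-- The `q`-th Betti number of a cubical set: the rank of the free part of the `q`-th
cubical homology `H_q(X) = Z_q(X) / B_q(X)`. -/
def betti (d q : ℕ) (X : Set (Fin d → ℝ)) : ℕ :=
  Module.finrank ℤ
    (↥(cycleMod d q X) ⧸ (boundaryMod d q X).comap (cycleMod d q X).subtype)

/-- `Λ_n = [-n, n]^d ⊆ ℝ^d`. -/
def lambda (d n : ℕ) : Set (Fin d → ℝ) := {x | ∀ i, x i ∈ Set.Icc (-(n : ℝ)) n}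

/-- The configuration space `Ω = [0,1]^{K^d}` with the product σ-field. -/
abbrev Config (d : ℕ) := ElemCube d → unitInterval

/-- Translation of an elementary cube by `x ∈ ℤ^d`. -/
def translateCube {d : ℕ} (x : Fin d → ℤ) (Q : ElemCube d) : ElemCube d :=
  fun i => ((Q i).1 + x i, (Q i).2)

/-- The translation action `τ_x` on configurations: `(τ_x ω)_Q = ω_{-x+Q}`. -/
def configShift {d : ℕ} (x : Fin d → ℤ) (ω : Config d) : Config d :=
  fun Q => ω (translateCube (-x) Q)

/-- Stationarity of a measure on configuration space: `P(τ_x⁻¹ A) = P(A)`. -/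
def Stationary {d : ℕ} (P : Measure (Config d)) : Prop :=
  ∀ (x : Fin d → ℤ) (A : Set (Config d)), MeasurableSet A → P (configShift x ⁻¹' A) = P A

/-- Ergodicity of a measure on configuration space under translations. -/
def ErgodicConfig {d : ℕ} (P : Measure (Config d)) : Prop :=
  ∀ A : Set (Config d), MeasurableSet A →
    (∀ x : Fin d → ℤ, configShift x ⁻¹' A = A) → P A = 0 ∨ P A = 1

/-- The random cubical set `X(t) = ⋃ {Q ∈ K^d : ω_Q ≤ t}`. -/
def cubSet {d : ℕ} (ω : Config d) (t : ℝ) : Set (Fin d → ℝ) :=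
  ⋃ Q ∈ {Q : ElemCube d | (ω Q : ℝ) ≤ t}, cubeSet Q

/-- `β_q^n(t)(ω) = β_q(X(t) ∩ Λ_n)`. -/
def bettiN (d q n : ℕ) (t : ℝ) (ω : Config d) : ℕ :=
  betti d q (cubSet ω t ∩ lambda d n)

/-- `β̂_q(t) := limsup_{n → ∞} |Λ_n|⁻¹ E[β_q^n(t)]`, where `|Λ_n| = (2n)^d`. -/
def betaHat (d q : ℕ) (P : Measure (Config d)) (t : ℝ) : ℝ :=
  limsup (fun n : ℕ => ((2 * (n : ℝ)) ^ d)⁻¹ * ∫ ω, (bettiN d q n t ω : ℝ) ∂P) atTop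

section BettiAlg

variable {M N : Type} [AddCommGroup M] [AddCommGroup N]

theorem fr_sup_inf (s t : Submodule ℤ M) [Module.Finite ℤ s] [Module.Finite ℤ t] :
    Module.finrank ℤ (s ⊔ t : Submodule ℤ M) + Module.finrank ℤ (s ⊓ t : Submodule ℤ M) =
    Module.finrank ℤ s + Module.finrank ℤ t := by
  have h := Submodule.rank_sup_add_rank_inf_eq s t
  have : Module.Finite ℤ (s ⊓ t : Submodule ℤ M) :=
    Module.Finite.of_injective (Submodule.inclusion (inf_le_left : s ⊓ t ≤ s))
      (Submodule.inclusion_injective _)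
  rw [← Module.finrank_eq_rank, ← Module.finrank_eq_rank, ← Module.finrank_eq_rank,
    ← Module.finrank_eq_rank] at h
  exact_mod_cast h

theorem fin_of_le {s t : Submodule ℤ M} [Module.Finite ℤ t] (h : s ≤ t) : Module.Finite ℤ s :=
  Module.Finite.of_injective (Submodule.inclusion h) (Submodule.inclusion_injective _)

theorem fr_mono {s t : Submodule ℤ M} [Module.Finite ℤ t] (h : s ≤ t) :
    Module.finrank ℤ s ≤ Module.finrank ℤ t :=
  LinearMap.finrank_le_finrank_of_injective (f := Submodule.inclusion h)
    (Submodule.inclusion_injective _)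

theorem fr_sup_le (s t : Submodule ℤ M) [Module.Finite ℤ s] [Module.Finite ℤ t] :
    Module.finrank ℤ (s ⊔ t : Submodule ℤ M) ≤ Module.finrank ℤ s + Module.finrank ℤ t := by
  have := fr_sup_inf s t
  omega

theorem fr_quot (Z B : Submodule ℤ M) [Module.Finite ℤ Z] :
    Module.finrank ℤ (↥Z ⧸ B.comap Z.subtype) + Module.finrank ℤ (Z ⊓ B : Submodule ℤ M)
      = Module.finrank ℤ Z := by
  rw [← Submodule.finrank_quotient_add_finrank (B.comap Z.subtype)]
  congr 1
  rw [(Submodule.equivSubtypeMap Z (B.comap Z.subtype)).finrank_eq, Submodule.map_comap_subtype]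

theorem fr_betti_diff {Z Z' B B' : Submodule ℤ M} [Module.Finite ℤ Z'] [Module.Finite ℤ B']
    (hZ : Z ≤ Z') (hB : B ≤ B') (m k : ℕ)
    (hm : Module.finrank ℤ Z' ≤ Module.finrank ℤ Z + m)
    (hk : Module.finrank ℤ B' ≤ Module.finrank ℤ B + k) :
    |(Module.finrank ℤ (↥Z' ⧸ B'.comap Z'.subtype) : ℝ) -
      (Module.finrank ℤ (↥Z ⧸ B.comap Z.subtype) : ℝ)| ≤ m + k := by
  have := fin_of_le hZ
  have := fin_of_le hB
  have h1 := fr_quot Z B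
  have h2 := fr_quot Z' B'
  have h3 := fr_sup_inf Z B
  have h4 := fr_sup_inf Z' B'
  have h5 := fr_mono (sup_le_sup hZ hB)
  have : Module.Finite ℤ (Z' ⊓ B' : Submodule ℤ M) := fin_of_le inf_le_left
  have h6 := fr_mono (inf_le_inf hZ hB)
  have h7 := fr_mono hZ
  rw [abs_le]
  constructor
  · rw [← sub_nonneg]
    have : (Module.finrank ℤ (↥Z ⧸ B.comap Z.subtype)) ≤
      (Module.finrank ℤ (↥Z' ⧸ B'.comap Z'.subtype)) + m + k := by omega
    have : ((Module.finrank ℤ (↥Z ⧸ B.comap Z.subtype) : ℕ) : ℝ) ≤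
      (Module.finrank ℤ (↥Z' ⧸ B'.comap Z'.subtype) : ℕ) + m + k := by exact_mod_cast this
    linarith
  · have : (Module.finrank ℤ (↥Z' ⧸ B'.comap Z'.subtype)) ≤
      (Module.finrank ℤ (↥Z ⧸ B.comap Z.subtype)) + m + k := by omega
    have : ((Module.finrank ℤ (↥Z' ⧸ B'.comap Z'.subtype) : ℕ) : ℝ) ≤
      (Module.finrank ℤ (↥Z ⧸ B.comap Z.subtype) : ℕ) + m + k := by exact_mod_cast this
    linarith

variable {ι : Type}

theorem fin_supp {s : Set ι} (hs : s.Finite) : Module.Finite ℤ (Finsupp.supported ℤ ℤ s) := by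
  have := hs.to_subtype
  exact Module.Finite.equiv (Finsupp.supportedEquivFinsupp (M := ℤ) (R := ℤ) s).symm

theorem fr_supp {s : Set ι} (hs : s.Finite) :
    Module.finrank ℤ (Finsupp.supported ℤ ℤ s) = s.ncard := by
  have := hs.fintype
  rw [(Finsupp.supportedEquivFinsupp (M := ℤ) (R := ℤ) s).finrank_eq, Module.finrank_finsupp_self,
    Set.ncard_eq_toFinset_card', Set.toFinset_card]

/-- Abstract Betti number. -/
def absBetti (f : (ι →₀ ℤ) →ₗ[ℤ] (ι →₀ ℤ)) (S T : Set ι) : ℕ :=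
  Module.finrank ℤ
    (↥(Finsupp.supported ℤ ℤ S ⊓ LinearMap.ker f) ⧸
      (Submodule.map f (Finsupp.supported ℤ ℤ T)).comap
        (Finsupp.supported ℤ ℤ S ⊓ LinearMap.ker f).subtype)

theorem absBetti_le (f : (ι →₀ ℤ) →ₗ[ℤ] (ι →₀ ℤ)) {S : Set ι} (T : Set ι) (hS : S.Finite) :
    absBetti f S T ≤ S.ncard := by
  have := fin_supp hS
  have : Module.Finite ℤ ↥(Finsupp.supported ℤ ℤ S ⊓ LinearMap.ker f) := fin_of_le inf_le_left
  have h1 := fr_quot (Finsupp.supported ℤ ℤ S ⊓ LinearMap.ker f)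
    (Submodule.map f (Finsupp.supported ℤ ℤ T))
  have h2 := fr_mono (inf_le_left : (Finsupp.supported ℤ ℤ S ⊓ LinearMap.ker f) ≤ _)
  rw [fr_supp hS] at h2
  unfold absBetti
  omega

theorem absBetti_diff (f : (ι →₀ ℤ) →ₗ[ℤ] (ι →₀ ℤ)) {S S' T T' : Set ι}
    (hS : S ⊆ S') (hT : T ⊆ T') (hS' : S'.Finite) (hT' : T'.Finite) :
    |(absBetti f S' T' : ℝ) - absBetti f S T| ≤ (S' \ S).ncard + (T' \ T).ncard := by
  have fS := hS'.subset hS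
  have fT := hT'.subset hT
  have fS' : (S' \ S).Finite := hS'.subset Set.sdiff_subset
  have fT' : (T' \ T).Finite := hT'.subset Set.sdiff_subset
  have := fin_supp hS'
  have := fin_supp hT'
  have := fin_supp fS
  have := fin_supp fT
  have := fin_supp fT'
  have i1 : Module.Finite ℤ ↥(Finsupp.supported ℤ ℤ S' ⊓ LinearMap.ker f) := fin_of_le inf_le_left
  unfold absBetti
  refine fr_betti_diff (inf_le_inf_right _ (Finsupp.supported_mono hS))
    (Submodule.map_mono (Finsupp.supported_mono hT)) _ _ ?_ ?_
  · have h := fr_sup_inf (Finsupp.supported ℤ ℤ S' ⊓ LinearMap.ker f) (Finsupp.supported ℤ ℤ S)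
    have h2 : (Finsupp.supported ℤ ℤ S' ⊓ LinearMap.ker f) ⊓ (Finsupp.supported ℤ ℤ S)
        = Finsupp.supported ℤ ℤ S ⊓ LinearMap.ker f := by
      rw [inf_right_comm, inf_eq_right.2 (Finsupp.supported_mono hS)]
    have h3 := fr_mono (sup_le inf_le_left (Finsupp.supported_mono hS) :
      (Finsupp.supported ℤ ℤ S' ⊓ LinearMap.ker f) ⊔ (Finsupp.supported ℤ ℤ S) ≤
        Finsupp.supported ℤ ℤ S')
    rw [h2] at h
    rw [fr_supp hS'] at h3
    rw [fr_supp fS] at h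
    have h4 := Set.ncard_sdiff_add_ncard_of_subset hS hS'
    omega
  · have h : Submodule.map f (Finsupp.supported ℤ ℤ T') =
      Submodule.map f (Finsupp.supported ℤ ℤ T) ⊔
        Submodule.map f (Finsupp.supported ℤ ℤ (T' \ T)) := by
      rw [← Submodule.map_sup, ← Finsupp.supported_union, Set.union_sdiff_cancel hT]
    rw [h]
    refine (fr_sup_le _ _).trans ?_
    have := Submodule.finrank_map_le f (Finsupp.supported ℤ ℤ (T' \ T))
    rw [fr_supp fT'] at this
    omega

end BettiAlg

section BettiGeo

variable {d : ℕ}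

/-- Finite set containing all cubes that contain `Q`. -/
def upCubes (Q : ElemCube d) : Finset (ElemCube d) :=
  Fintype.piFinset fun i => {((Q i).1, false), ((Q i).1, true), ((Q i).1 - 1, true)}

/-- Finite set containing all cubes in `Λ_n`. -/
def boxCubes (d n : ℕ) : Finset (ElemCube d) :=
  Fintype.piFinset fun _ => Finset.Icc (-(n : ℤ)) n ×ˢ Finset.univ

theorem card_upCubes (Q : ElemCube d) : (upCubes Q).card ≤ 3 ^ d := by
  unfold upCubes
  rw [Fintype.card_piFinset]
  calc _ ≤ ∏ _i : Fin d, 3 := Finset.prod_le_prod' fun i _ => Finset.card_le_three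
    _ = 3 ^ d := by simp

theorem card_boxCubes (n : ℕ) : (boxCubes d n).card = (2 * (2 * n + 1)) ^ d := by
  unfold boxCubes
  rw [Fintype.card_piFinset]
  simp
  congr 1
  omega

theorem mem_boxCubes {n : ℕ} {Q : ElemCube d} (h : cubeSet Q ⊆ lambda d n) : Q ∈ boxCubes d n := by
  unfold boxCubes
  rw [Fintype.mem_piFinset]
  intro i
  have h1 : (fun i => ((Q i).1 : ℝ)) ∈ cubeSet Q := by
    intro i
    constructor
    · exact le_rfl
    · split_ifs <;> simp
  have h2 := h h1 i
  simp only [Set.mem_Icc] at h2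
  simp only [Finset.mem_product, Finset.mem_univ, and_true, Finset.mem_Icc]
  constructor
  · exact_mod_cast h2.1
  · exact_mod_cast h2.2

theorem sub_cubSet_iff (Q : ElemCube d) (ω : Config d) (t : ℝ) :
    cubeSet Q ⊆ cubSet ω t ↔ ∃ Q' ∈ upCubes Q, cubeSet Q ⊆ cubeSet Q' ∧ (ω Q' : ℝ) ≤ t := by
  constructor
  · intro h
    have h1 : (fun i => ((Q i).1 : ℝ) + if (Q i).2 then 1 / 2 else 0) ∈ cubeSet Q := by
      intro i
      dsimp only
      constructor
      · split_ifs <;> simp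
      · split_ifs <;> simp
        norm_num
    have h2 := h h1
    simp only [cubSet, Set.mem_iUnion, Set.mem_setOf_eq] at h2
    obtain ⟨Q', hQ', hx⟩ := h2
    have key : ∀ i, Q' i = Q i ∨ ((Q i).2 = false ∧
        (Q' i = ((Q i).1, true) ∨ Q' i = ((Q i).1 - 1, true))) := by
      intro i
      have hi := hx i
      dsimp only at hi
      generalize Q i = a at *
      generalize Q' i = b at *
      obtain ⟨l, bl⟩ := a
      obtain ⟨m, bm⟩ := b
      obtain ⟨ha, hb⟩ := hi
      cases bl <;> cases bm <;> simp at ha hb ⊢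
      · exact le_antisymm ha (by exact_mod_cast hb)
      · have hb' : l ≤ m + 1 := by exact_mod_cast hb
        omega
      · have : (l : ℝ) < m := by linarith
        have h3 : (m : ℝ) < l + 1 := by linarith
        have : l < m := by exact_mod_cast this
        have h3 : m < l + 1 := by exact_mod_cast h3
        omega
      · have h3 : (m : ℝ) < l + 1 := by linarith
        have h4 : (l : ℝ) < m + 1 := by linarith
        have h3 : m < l + 1 := by exact_mod_cast h3
        have h4 : l < m + 1 := by exact_mod_cast h4
        omega
    refine ⟨Q', ?_, ?_, hQ'⟩
    · unfold upCubes
      rw [Fintype.mem_piFinset]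
      intro i
      rcases key i with h | ⟨_, h | h⟩
      · rw [h]
        cases hb : (Q i).2 <;> simp [Prod.ext_iff, hb]
      · simp [h]
      · simp [h]
    · intro x hxQ i
      have := hxQ i
      rcases key i with h | ⟨h0, h | h⟩
      · rw [h]; exact this
      · rw [h0] at this
        simp at this
        rw [h]
        simp
        constructor <;> linarith
      · rw [h0] at this
        simp at this
        rw [h]
        simp
        constructor <;> linarith
  · rintro ⟨Q', _, h, ht⟩ x hx
    simp only [cubSet, Set.mem_iUnion, Set.mem_setOf_eq]
    exact ⟨Q', ht, h hx⟩

theorem cubSet_mono (ω : Config d) {s t : ℝ} (h : s ≤ t) : cubSet ω s ⊆ cubSet ω t := by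
  unfold cubSet
  exact Set.biUnion_subset_biUnion_left fun Q hQ => le_trans hQ h

/-- `k`-cubes in `X`. -/
def kCubes (d k : ℕ) (X : Set (Fin d → ℝ)) : Set (ElemCube d) :=
  {Q : ElemCube d | cubeDim Q = k ∧ cubeSet Q ⊆ X}

theorem kCubes_sub (k n : ℕ) (X : Set (Fin d → ℝ)) :
    kCubes d k (X ∩ lambda d n) ⊆ boxCubes d n := fun _ hQ =>
  mem_boxCubes (hQ.2.trans Set.inter_subset_right)

theorem kCubes_fin (k n : ℕ) (X : Set (Fin d → ℝ)) :
    (kCubes d k (X ∩ lambda d n)).Finite := (Finset.finite_toSet _).subset (kCubes_sub k n X)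

theorem betti_eq (d q : ℕ) (X : Set (Fin d → ℝ)) :
    betti d q X = absBetti (boundaryHom d) (kCubes d q X) (kCubes d (q + 1) X) := rfl

theorem bettiN_le (q n : ℕ) (t : ℝ) (ω : Config d) :
    bettiN d q n t ω ≤ (boxCubes d n).card := by
  unfold bettiN
  rw [betti_eq]
  refine (absBetti_le _ _ (kCubes_fin _ _ _)).trans ?_
  rw [← Set.ncard_coe_finset]
  exact Set.ncard_le_ncard (kCubes_sub _ _ _) (Finset.finite_toSet _)

/-- Event that `ω_Q ≤ t`. -/
def evt (Q : ElemCube d) (t : ℝ) : Set (Config d) := {ω | (ω Q : ℝ) ≤ t}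

theorem evt_meas (Q : ElemCube d) (t : ℝ) : MeasurableSet (evt Q t) := by
  unfold evt
  exact measurableSet_le (measurable_subtype_coe.comp (measurable_pi_apply Q)) measurable_const

theorem sub_meas (Q : ElemCube d) (n : ℕ) (t : ℝ) :
    MeasurableSet {ω : Config d | cubeSet Q ⊆ cubSet ω t ∩ lambda d n} := by
  have : {ω : Config d | cubeSet Q ⊆ cubSet ω t ∩ lambda d n} =
      (⋃ Q' ∈ upCubes Q, {ω | cubeSet Q ⊆ cubeSet Q'} ∩ evt Q' t) ∩
        {ω | cubeSet Q ⊆ lambda d n} := by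
    ext ω
    simp only [Set.subset_inter_iff, sub_cubSet_iff, evt, Set.mem_inter_iff, Set.mem_setOf_eq,
      Set.mem_iUnion, exists_prop]
  rw [this]
  exact (Finset.measurableSet_biUnion _ fun Q' _ =>
    (MeasurableSet.const _).inter (evt_meas _ _)).inter (MeasurableSet.const _)

theorem bettiN_meas (q n : ℕ) (t : ℝ) : Measurable (bettiN d q n t) := by
  let φ : Config d → (boxCubes d n → Prop) := fun ω Q => cubeSet Q.1 ⊆ cubSet ω t ∩ lambda d n
  let G : (boxCubes d n → Prop) → ℕ := fun p =>
    absBetti (boundaryHom d) {Q | cubeDim Q = q ∧ ∃ h : Q ∈ boxCubes d n, p ⟨Q, h⟩}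
      {Q | cubeDim Q = q + 1 ∧ ∃ h : Q ∈ boxCubes d n, p ⟨Q, h⟩}
  have hG : Measurable G := measurable_of_finite G
  have hφ : Measurable φ := by
    rw [measurable_pi_iff]
    intro Q
    exact measurableSet_setOf.1 (sub_meas Q.1 n t)
  have : bettiN d q n t = G ∘ φ := by
    funext ω
    have : ∀ k, kCubes d k (cubSet ω t ∩ lambda d n) =
        {Q | cubeDim Q = k ∧ ∃ h : Q ∈ boxCubes d n, φ ω ⟨Q, h⟩} := by
      intro k
      ext Q
      constructor
      · intro h
        exact ⟨h.1, kCubes_sub _ _ _ h, h.2⟩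
      · rintro ⟨h1, _, h2⟩
        exact ⟨h1, h2⟩
    simp only [bettiN, betti_eq, this]
    rfl
  rw [this]
  exact hG.comp hφ

open Classical in
theorem bettiN_diff (q n : ℕ) {s t : ℝ} (hst : s ≤ t) (ω : Config d) :
    |(bettiN d q n t ω : ℝ) - bettiN d q n s ω| ≤
      ∑ Q ∈ boxCubes d n, ∑ Q' ∈ upCubes Q,
        ((evt Q' t).indicator (1 : Config d → ℝ) ω - (evt Q' s).indicator 1 ω) := by
  unfold bettiN
  rw [betti_eq, betti_eq]
  have hX : cubSet ω s ∩ lambda d n ⊆ cubSet ω t ∩ lambda d n :=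
    Set.inter_subset_inter_left _ (cubSet_mono ω hst)
  have hk : ∀ k, kCubes d k (cubSet ω s ∩ lambda d n) ⊆ kCubes d k (cubSet ω t ∩ lambda d n) :=
    fun k Q hQ => ⟨hQ.1, hQ.2.trans hX⟩
  refine (absBetti_diff _ (hk q) (hk (q + 1)) (kCubes_fin _ _ _) (kCubes_fin _ _ _)).trans ?_
  set g : ElemCube d → Prop := fun Q => ∃ Q' ∈ upCubes Q, (ω Q' : ℝ) ≤ t ∧ ¬ (ω Q' : ℝ) ≤ s with hg
  have hd : ∀ k, (kCubes d k (cubSet ω t ∩ lambda d n) \ kCubes d k (cubSet ω s ∩ lambda d n)).ncard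
      ≤ ((boxCubes d n).filter fun Q => g Q ∧ cubeDim Q = k).card := by
    intro k
    rw [← Set.ncard_coe_finset]
    refine Set.ncard_le_ncard ?_ (Finset.finite_toSet _)
    rintro Q ⟨h1, h2⟩
    simp only [Finset.coe_filter, Set.mem_setOf_eq]
    refine ⟨kCubes_sub _ _ _ h1, ?_, h1.1⟩
    have h3 := h1.2
    rw [Set.subset_inter_iff, sub_cubSet_iff] at h3
    obtain ⟨⟨Q', hQ', hsub, ht⟩, hL⟩ := h3
    refine ⟨Q', hQ', ht, fun hs => h2 ⟨h1.1, ?_⟩⟩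
    rw [Set.subset_inter_iff, sub_cubSet_iff]
    exact ⟨⟨Q', hQ', hsub, hs⟩, hL⟩
  have hsum : ((boxCubes d n).filter fun Q => g Q ∧ cubeDim Q = q).card +
      ((boxCubes d n).filter fun Q => g Q ∧ cubeDim Q = q + 1).card ≤
      ((boxCubes d n).filter g).card := by
    rw [← Finset.card_union_of_disjoint]
    · apply Finset.card_le_card
      intro Q
      simp only [Finset.mem_union, Finset.mem_filter]
      tauto
    · rw [Finset.disjoint_left]
      intro Q h1 h2
      rw [Finset.mem_filter] at h1 h2
      omega
  have h1 := (Nat.add_le_add (hd q) (hd (q + 1))).trans hsum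
  have h2 : (((boxCubes d n).filter g).card : ℝ) ≤ ∑ Q ∈ boxCubes d n, ∑ Q' ∈ upCubes Q,
        ((evt Q' t).indicator (1 : Config d → ℝ) ω - (evt Q' s).indicator 1 ω) := by
    have hnn : ∀ Q' : ElemCube d,
        0 ≤ (evt Q' t).indicator (1 : Config d → ℝ) ω - (evt Q' s).indicator 1 ω := by
      intro Q'
      rw [sub_nonneg]
      exact Set.indicator_le_indicator_of_subset (fun ω h => le_trans h hst) (by simp) ω
    rw [Finset.card_filter]
    push_cast
    refine Finset.sum_le_sum fun Q _ => ?_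
    split_ifs with h
    · obtain ⟨Q', hQ', ht, hs⟩ := h
      refine le_trans ?_ (Finset.single_le_sum (fun Q' _ => hnn Q') hQ')
      rw [Set.indicator_of_mem (show ω ∈ evt Q' t from ht),
        Set.indicator_of_notMem (show ω ∉ evt Q' s from hs)]
      simp
    · exact Finset.sum_nonneg fun Q' _ => hnn Q'
  refine le_trans ?_ h2
  exact_mod_cast h1

end BettiGeo

section BettiProb

variable {d : ℕ}

theorem evt_stat {P : Measure (Config d)} (hstat : Stationary P) (Q : ElemCube d) (t : ℝ) :
    P (evt Q t) = P (evt (fun i => (0, (Q i).2)) t) := by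
  rw [← hstat (fun i => (Q i).1) (evt Q t) (evt_meas Q t)]
  congr 1
  ext ω
  simp only [evt, Set.mem_preimage, Set.mem_setOf_eq, configShift]
  have : translateCube (-fun i => (Q i).1) Q = fun i => (0, (Q i).2) := by
    funext i
    simp [translateCube]
  rw [this]

/-- Sum of the distribution functions over all cube types. -/
def Phi (P : Measure (Config d)) (t : ℝ) : ℝ :=
  ∑ σ : Fin d → Bool, (P (evt (fun i => (0, σ i)) t)).toReal

theorem evt_diff_le {P : Measure (Config d)} [IsProbabilityMeasure P] (hstat : Stationary P)
    (Q : ElemCube d) {s t : ℝ} (hst : s ≤ t) :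
    (P (evt Q t)).toReal - (P (evt Q s)).toReal ≤ Phi P t - Phi P s := by
  rw [evt_stat hstat Q t, evt_stat hstat Q s]
  unfold Phi
  rw [← Finset.sum_sub_distrib]
  refine Finset.single_le_sum (f := fun σ : Fin d → Bool => (P (evt (fun i => (0, σ i)) t)).toReal
    - (P (evt (fun i => (0, σ i)) s)).toReal) (fun σ _ => ?_) (Finset.mem_univ fun i => (Q i).2)
  rw [sub_nonneg]
  exact ENNReal.toReal_mono (measure_ne_top _ _) (measure_mono fun ω h => le_trans h hst)

theorem bettiN_int (P : Measure (Config d)) [IsProbabilityMeasure P] (q n : ℕ) (t : ℝ) :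
    Integrable (fun ω => (bettiN d q n t ω : ℝ)) P := by
  refine Integrable.of_bound (C := (boxCubes d n).card)
    (measurable_from_nat.comp (bettiN_meas q n t)).aestronglyMeasurable ?_
  refine Eventually.of_forall fun ω => ?_
  simp only [Real.norm_natCast]
  exact_mod_cast bettiN_le q n t ω

theorem exp_diff {P : Measure (Config d)} [IsProbabilityMeasure P] (hstat : Stationary P)
    (q n : ℕ) {s t : ℝ} (hst : s ≤ t) :
    |∫ ω, (bettiN d q n t ω : ℝ) ∂P - ∫ ω, (bettiN d q n s ω : ℝ) ∂P| ≤
      (2 * (2 * n + 1)) ^ d * 3 ^ d * (Phi P t - Phi P s) := by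
  have hi : ∀ (Q : ElemCube d) (t : ℝ), Integrable ((evt Q t).indicator (1 : Config d → ℝ)) P :=
    fun Q t => (integrable_const (1 : ℝ)).indicator (evt_meas Q t)
  have hi2 : ∀ (Q : ElemCube d), Integrable (fun ω =>
      (evt Q t).indicator (1 : Config d → ℝ) ω - (evt Q s).indicator 1 ω) P :=
    fun Q => (hi Q t).sub (hi Q s)
  have hPhi : 0 ≤ Phi P t - Phi P s := by
    refine le_trans ?_ (evt_diff_le hstat (fun _ => (0, true)) hst)
    rw [sub_nonneg]
    exact ENNReal.toReal_mono (measure_ne_top _ _) (measure_mono fun ω h => le_trans h hst)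
  rw [← integral_sub (bettiN_int P q n t) (bettiN_int P q n s)]
  refine (abs_integral_le_integral_abs).trans ?_
  refine (integral_mono ((bettiN_int P q n t).sub (bettiN_int P q n s)).abs
    (integrable_finset_sum _ fun Q _ => integrable_finset_sum _ fun Q' _ => hi2 Q')
    (fun ω => bettiN_diff q n hst ω)).trans ?_
  rw [integral_finset_sum _ fun Q _ => integrable_finset_sum _ fun Q' _ => hi2 Q']
  have hb : ∀ Q ∈ boxCubes d n, (∫ ω, ∑ Q' ∈ upCubes Q,
      ((evt Q' t).indicator (1 : Config d → ℝ) ω - (evt Q' s).indicator 1 ω) ∂P) ≤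
      3 ^ d * (Phi P t - Phi P s) := by
    intro Q _
    rw [integral_finset_sum _ fun Q' _ => hi2 Q']
    refine (Finset.sum_le_card_nsmul _ _ (Phi P t - Phi P s) fun Q' _ => ?_).trans ?_
    · rw [integral_sub (hi Q' t) (hi Q' s), integral_indicator_one (evt_meas _ _),
        integral_indicator_one (evt_meas _ _)]
      exact evt_diff_le hstat Q' hst
    · rw [nsmul_eq_mul]
      refine mul_le_mul_of_nonneg_right ?_ hPhi
      exact_mod_cast card_upCubes Q
  refine (Finset.sum_le_card_nsmul _ _ _ hb).trans ?_
  rw [nsmul_eq_mul, card_boxCubes]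
  push_cast
  rw [mul_assoc]

theorem pow_ratio {n : ℕ} (hn : 1 ≤ n) :
    ((2 * (n : ℝ)) ^ d)⁻¹ * (2 * (2 * n + 1)) ^ d ≤ 3 ^ d := by
  have : (1 : ℝ) ≤ n := by exact_mod_cast hn
  rw [inv_mul_le_iff₀ (by positivity), ← mul_pow]
  apply pow_le_pow_left₀ (by positivity)
  linarith

/-- Normalised expectation. -/
def aSeq (d q : ℕ) (P : Measure (Config d)) (t : ℝ) (n : ℕ) : ℝ :=
  ((2 * (n : ℝ)) ^ d)⁻¹ * ∫ ω, (bettiN d q n t ω : ℝ) ∂P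

theorem aSeq_nonneg (q : ℕ) (P : Measure (Config d)) (t : ℝ) (n : ℕ) : 0 ≤ aSeq d q P t n := by
  unfold aSeq
  exact mul_nonneg (by positivity) (integral_nonneg fun ω => by positivity)

theorem aSeq_le (q : ℕ) (P : Measure (Config d)) [IsProbabilityMeasure P] (t : ℝ) {n : ℕ}
    (hn : 1 ≤ n) : aSeq d q P t n ≤ 3 ^ d := by
  refine le_trans ?_ (pow_ratio hn)
  unfold aSeq
  refine mul_le_mul_of_nonneg_left ?_ (by positivity)
  calc ∫ ω, (bettiN d q n t ω : ℝ) ∂P ≤ ∫ _ω, ((boxCubes d n).card : ℝ) ∂P :=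
        integral_mono (bettiN_int P q n t) (integrable_const _)
          fun ω => Nat.cast_le.2 (bettiN_le q n t ω)
    _ = _ := by rw [card_boxCubes]; simp

theorem aSeq_diff {P : Measure (Config d)} [IsProbabilityMeasure P] (hstat : Stationary P)
    (q : ℕ) {s t : ℝ} (hst : s ≤ t) {n : ℕ} (hn : 1 ≤ n) :
    |aSeq d q P t n - aSeq d q P s n| ≤ 9 ^ d * |Phi P t - Phi P s| := by
  unfold aSeq
  rw [← mul_sub, abs_mul, abs_of_nonneg (a := ((2 * (n : ℝ)) ^ d)⁻¹) (by positivity)]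
  calc _ ≤ ((2 * (n : ℝ)) ^ d)⁻¹ * ((2 * (2 * n + 1)) ^ d * 3 ^ d * |Phi P t - Phi P s|) := by
        refine mul_le_mul_of_nonneg_left ((exp_diff hstat q n hst).trans ?_) (by positivity)
        exact mul_le_mul_of_nonneg_left (le_abs_self _) (by positivity)
    _ = (((2 * (n : ℝ)) ^ d)⁻¹ * (2 * (2 * n + 1)) ^ d) * (3 ^ d * |Phi P t - Phi P s|) := by ring
    _ ≤ 3 ^ d * (3 ^ d * |Phi P t - Phi P s|) :=
        mul_le_mul_of_nonneg_right (pow_ratio hn) (by positivity)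
    _ = _ := by
        rw [← mul_assoc, ← mul_pow]
        norm_num

theorem limsup_le_add {u v : ℕ → ℝ} {B e : ℝ} (hu : ∀ n, 0 ≤ u n)
    (hv : ∀ n, 0 ≤ v n) (hvB : ∀ n, 1 ≤ n → v n ≤ B)
    (h : ∀ n, 1 ≤ n → u n ≤ v n + e) : limsup u atTop ≤ limsup v atTop + e := by
  refine le_of_forall_pos_le_add fun ε hε => ?_
  have hb : IsBoundedUnder (· ≤ ·) atTop v :=
    isBoundedUnder_of_eventually_le (a := B) (eventually_atTop.2 ⟨1, hvB⟩)
  have hlt : limsup v atTop < limsup v atTop + ε := by linarith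
  have hev := eventually_lt_of_limsup_lt hlt hb
  refine limsup_le_of_le ?_ ?_
  · exact (isBoundedUnder_of_eventually_ge (a := 0) (Eventually.of_forall hu)).isCoboundedUnder_le
  · filter_upwards [hev, eventually_ge_atTop 1] with n h1 h2
    have := h n h2
    linarith

theorem betaHat_diff {P : Measure (Config d)} [IsProbabilityMeasure P] (hstat : Stationary P)
    (q : ℕ) (s t : ℝ) :
    |betaHat d q P t - betaHat d q P s| ≤ 9 ^ d * |Phi P t - Phi P s| := by
  wlog hst : s ≤ t generalizing s t
  · rw [abs_sub_comm, abs_sub_comm (Phi P t)]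
    exact this t s (le_of_not_ge hst)
  have h1 : betaHat d q P t ≤ betaHat d q P s + 9 ^ d * |Phi P t - Phi P s| :=
    limsup_le_add (aSeq_nonneg q P t) (aSeq_nonneg q P s) (fun n hn => aSeq_le q P s hn)
      fun n hn => by
        have := (abs_le.1 (aSeq_diff hstat q hst hn)).2
        unfold aSeq at this
        linarith
  have h2 : betaHat d q P s ≤ betaHat d q P t + 9 ^ d * |Phi P t - Phi P s| :=
    limsup_le_add (aSeq_nonneg q P s) (aSeq_nonneg q P t) (fun n hn => aSeq_le q P t hn)
      fun n hn => by
        have := (abs_le.1 (aSeq_diff hstat q hst hn)).1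
        unfold aSeq at this
        linarith
  rw [abs_le]
  constructor <;> linarith

end BettiProb

/-- Fix `0 ≤ q < d` and let `P` be a stationary and ergodic probability
measure on `Ω = [0,1]^{K^d}` whose marginal distribution functions `F^Q(t) = P(ω_Q ≤ t)`
are continuous on `[0,1]` for every elementary cube `Q`. Then
`β̂_q(t) = limsup_{n→∞} |Λ_n|⁻¹ E[β_q^n(t)]` is uniformly continuous on `[0,1]`. -/
theorem betaHat_uniformContinuous (d q : ℕ) (hq : q < d)
    (P : Measure (Config d)) [IsProbabilityMeasure P]
    (hstat : Stationary P) (herg : ErgodicConfig P)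
    (hcont : ∀ Q : ElemCube d,
      ContinuousOn (fun t : ℝ => (P {ω : Config d | (ω Q : ℝ) ≤ t}).toReal)
        (Set.Icc (0 : ℝ) 1)) :
    UniformContinuousOn (fun t => betaHat d q P t) (Set.Icc (0 : ℝ) 1) := by
  have hPhi : UniformContinuousOn (Phi P) (Set.Icc (0 : ℝ) 1) := by
    apply isCompact_Icc.uniformContinuousOn_of_continuous
    unfold Phi
    exact continuousOn_finset_sum _ fun σ _ => hcont _
  rw [Metric.uniformContinuousOn_iff] at hPhi ⊢
  intro ε hε
  obtain ⟨δ, hδ, h⟩ := hPhi (ε / 9 ^ d) (by positivity)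
  refine ⟨δ, hδ, fun x hx y hy hxy => ?_⟩
  have h1 := h x hx y hy hxy
  rw [Real.dist_eq] at h1 ⊢
  refine (betaHat_diff hstat q y x).trans_lt ?_
  rwa [lt_div_iff₀' (by positivity)] at h1

end
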